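/- Let 𝔖 be the set of finite sequences (i₁,...,iₙ) over {0,1,2} with iₙ ≠ 0 and iⱼ ≠ 1 for all j < n. For σ = (i₁,...,iₙ) ∈ 𝔖, set v(σ) = Σⱼ₌₁ⁿ iⱼ/3ʲ, and for k ∈ ℕ set a_{σ,k} = v(σ) − (−1)^{iₙ}/(k·3^{n+1}). Let D = {v(σ) : σ ∈ 𝔖} and E = ⋃_σ {a_{σ,k} : k ∈ ℕ}. Then E is a bounded discrete subset of ℝ, D has no isolated points, and D is contained in the closure of E; consequently, the closure of E is not a finite union of discrete sets. -/

import Mathlib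

/-- A subset `S` of a topological space is discrete if every point of `S` has an
open neighborhood meeting `S` only in that point. -/
def IsDiscreteIn {T : Type*} [TopologicalSpace T] (S : Set T) : Prop :=
  ∀ x ∈ S, ∃ U : Set T, IsOpen U ∧ U ∩ S = {x}

/-- Membership in `𝔖`: a nonempty finite sequence over `{0,1,2}` whose last
entry is nonzero and whose non-final entries are never `1`. -/
def Sgood (l : List ℕ) : Prop :=
  l ≠ [] ∧ (∀ x ∈ l, x ≤ 2) ∧ l.getD (l.length - 1) 0 ≠ 0 ∧
    ∀ j, j < l.length - 1 → l.getD j 0 ≠ 1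

/-- `v(σ) = ∑_{j=1}^{n} i_j / 3^j`. -/
noncomputable def vval (l : List ℕ) : ℝ :=
  ∑ j ∈ Finset.range l.length, (l.getD j 0 : ℝ) / 3 ^ (j + 1)

/-- `u(σ) = ∑_{j=1}^{n-1} i_j / 3^j`. -/
noncomputable def uval (l : List ℕ) : ℝ :=
  ∑ j ∈ Finset.range (l.length - 1), (l.getD j 0 : ℝ) / 3 ^ (j + 1)

/-- `a_{σ,k} = v(σ) - (-1)^{i_n} / (k · 3^{n+1})`. -/
noncomputable def aval (l : List ℕ) (k : ℕ) : ℝ :=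
  vval l - (-1 : ℝ) ^ (l.getD (l.length - 1) 0) / (k * 3 ^ (l.length + 1))

lemma vval_cons (d : ℕ) (l : List ℕ) : vval (d :: l) = d / 3 + vval l / 3 := by
  unfold vval
  rw [List.length_cons, Finset.sum_range_succ', Finset.sum_div, add_comm]
  congr 1
  · simp
  · apply Finset.sum_congr rfl
    intro j _
    simp only [List.getD_cons_succ]
    rw [pow_succ 3 (j + 1)]
    field_simp

lemma aval_cons (d : ℕ) (l : List ℕ) (hl : l ≠ []) (k : ℕ) :
    aval (d :: l) k = d / 3 + aval l k / 3 := by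
  obtain ⟨e, m, rfl⟩ := List.exists_cons_of_ne_nil hl
  unfold aval
  rw [vval_cons]
  simp only [List.length_cons, Nat.add_sub_cancel, List.getD_cons_succ]
  rw [pow_succ 3 (m.length + 1 + 1), ← mul_assoc, div_mul_eq_div_div]
  ring

lemma vval_nil : vval [] = 0 := by simp [vval]

lemma aval_one (k : ℕ) : aval [1] k = 1 / 3 + (1 / (k : ℝ)) / 9 := by
  unfold aval
  rw [vval_cons, vval_nil, div_div]
  norm_num
  ring

lemma aval_two (k : ℕ) : aval [2] k = 2 / 3 - (1 / (k : ℝ)) / 9 := by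
  unfold aval
  rw [vval_cons, vval_nil, div_div]
  norm_num

lemma good_one : Sgood [1] := by simp [Sgood]

lemma good_two : Sgood [2] := by simp [Sgood]

lemma good_cons {d : ℕ} (hd : d = 0 ∨ d = 2) {l : List ℕ} (h : Sgood l) : Sgood (d :: l) := by
  obtain ⟨h0, h1, h2, h3⟩ := h
  obtain ⟨e, m, rfl⟩ := List.exists_cons_of_ne_nil h0
  refine ⟨by simp, ?_, ?_, ?_⟩
  · intro x hx
    rcases List.mem_cons.1 hx with rfl | hx
    · omega
    · exact h1 x hx
  · simpa using h2
  · intro j hj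
    cases j with
    | zero => simp only [List.getD_cons_zero]; omega
    | succ j =>
      rw [List.getD_cons_succ]
      apply h3
      simp at hj ⊢
      omega

lemma good_cases {l : List ℕ} (h : Sgood l) : l = [1] ∨ l = [2] ∨
    ∃ d m, (d = 0 ∨ d = 2) ∧ Sgood m ∧ l = d :: m := by
  obtain ⟨h0, h1, h2, h3⟩ := h
  obtain ⟨d, m, rfl⟩ := List.exists_cons_of_ne_nil h0
  have hd := h1 d (by simp)
  rcases m with _ | ⟨e, m⟩
  · simp at h2
    have : d = 1 ∨ d = 2 := by omega
    rcases this with rfl | rfl <;> simp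
  · right; right
    refine ⟨d, e :: m, ?_, ⟨by simp, fun x hx => h1 x (List.mem_cons_of_mem _ hx), ?_, ?_⟩, rfl⟩
    · have := h3 0 (by simp)
      simp only [List.getD_cons_zero] at this
      omega
    · simpa using h2
    · intro j hj
      have := h3 (j + 1) (by simp at hj ⊢; omega)
      rwa [List.getD_cons_succ] at this

/-- Induction principle for good sequences. -/
lemma good_ind {P : List ℕ → Prop} (h1 : P [1]) (h2 : P [2])
    (hc : ∀ d m, (d = 0 ∨ d = 2) → Sgood m → P m → P (d :: m)) :
    ∀ l, Sgood l → P l := by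
  intro l
  induction l with
  | nil => intro h; exact absurd rfl h.1
  | cons a t ih =>
    intro h
    rcases good_cases h with h | h | ⟨d, m, hd, hm, h⟩
    · rw [h]; exact h1
    · rw [h]; exact h2
    · obtain ⟨rfl, rfl⟩ := List.cons.inj h
      exact hc _ _ hd hm (ih hm)

lemma inv_bd {k : ℕ} (hk : 1 ≤ k) : 0 < 1 / (k : ℝ) ∧ 1 / (k : ℝ) ≤ 1 := by
  have : (1 : ℝ) ≤ k := by exact_mod_cast hk
  refine ⟨by positivity, ?_⟩
  rw [div_le_one (by linarith)]; exact this

lemma aval_mem {k : ℕ} (hk : 1 ≤ k) : ∀ l, Sgood l → 0 < aval l k ∧ aval l k < 1 := by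
  have := inv_bd hk
  apply good_ind
  · rw [aval_one]; constructor <;> linarith
  · rw [aval_two]; constructor <;> linarith
  · intro d m hd hm ih
    rw [aval_cons _ _ hm.1]
    rcases hd with rfl | rfl <;> push_cast <;> constructor <;> linarith

lemma sep {k j : ℕ} (hk : 1 ≤ k) (hj : 1 ≤ j)
    (h : |1 / (j : ℝ) - 1 / k| < 1 / (k * (k + 1))) : j = k := by
  have hk' : (1 : ℝ) ≤ k := by exact_mod_cast hk
  have hj' : (1 : ℝ) ≤ j := by exact_mod_cast hj
  by_contra hne
  rw [abs_lt] at h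
  have e : 1 / ((k : ℝ) * (k + 1)) = 1 / k - 1 / (k + 1) := by field_simp; ring
  rcases lt_or_gt_of_ne hne with hlt | hgt
  · have h1 : (j : ℝ) + 1 ≤ k := by exact_mod_cast hlt
    have e2 : 1 / (j : ℝ) - 1 / k = (k - j) / (j * k) := by field_simp
    have : 1 / ((k : ℝ) * (k + 1)) ≤ (k - j) / (j * k) := by
      apply div_le_div₀ <;> first | positivity | nlinarith
    linarith [h.2]
  · have h1 : (k : ℝ) + 1 ≤ j := by exact_mod_cast hgt
    have : 1 / (j : ℝ) ≤ 1 / (k + 1) := one_div_le_one_div_of_le (by positivity) h1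
    linarith [h.1]

lemma iso {k : ℕ} (hk : 1 ≤ k) : ∀ l, Sgood l → ∃ ε > 0, ∀ m, Sgood m → ∀ j, 1 ≤ j →
    |aval m j - aval l k| < ε → aval m j = aval l k := by
  have hb := inv_bd hk
  have hk' : (1 : ℝ) ≤ k := by exact_mod_cast hk
  have hs : 1 / ((k : ℝ) * (k + 1)) ≤ 1 / k :=
    one_div_le_one_div_of_le (by positivity) (by nlinarith)
  apply good_ind
  · refine ⟨1 / ((k : ℝ) * (k + 1)) / 9, by positivity, ?_⟩
    intro m hm j hj h
    have hbj := inv_bd hj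
    rcases good_cases hm with rfl | rfl | ⟨d, m, hd, hm2, rfl⟩
    · rw [aval_one, aval_one] at h
      rw [sep (k := k) (j := j) hk hj]
      rw [abs_lt] at h ⊢
      constructor <;> linarith
    · rw [aval_one, aval_two, abs_lt] at h
      linarith
    · have := aval_mem hj _ hm2
      rw [aval_cons _ _ hm2.1, aval_one, abs_lt] at h
      rcases hd with rfl | rfl <;> push_cast at h <;> linarith
  · refine ⟨1 / ((k : ℝ) * (k + 1)) / 9, by positivity, ?_⟩
    intro m hm j hj h
    have hbj := inv_bd hj
    rcases good_cases hm with rfl | rfl | ⟨d, m, hd, hm2, rfl⟩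
    · rw [aval_one, aval_two, abs_lt] at h
      linarith
    · rw [aval_two, aval_two] at h
      rw [sep (k := k) (j := j) hk hj]
      rw [abs_lt] at h ⊢
      constructor <;> linarith
    · have := aval_mem hj _ hm2
      rw [aval_cons _ _ hm2.1, aval_two, abs_lt] at h
      rcases hd with rfl | rfl <;> push_cast at h <;> linarith
  · rintro d l hd hl ⟨ε, hε, ih⟩
    have hl01 := aval_mem hk _ hl
    refine ⟨min (ε / 3) (min (aval l k / 3) ((1 - aval l k) / 3)), ?_, ?_⟩
    · refine lt_min (by linarith) (lt_min (by linarith) (by linarith))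
    intro m hm j hj h
    have hbj := inv_bd hj
    rw [lt_min_iff, lt_min_iff] at h
    obtain ⟨ha, hb', hc⟩ := h
    rw [aval_cons _ _ hl.1] at *
    rcases good_cases hm with rfl | rfl | ⟨e, m, he, hm2, rfl⟩
    · rw [aval_one, abs_lt] at *
      rcases hd with rfl | rfl <;> push_cast at * <;> linarith
    · rw [aval_two, abs_lt] at *
      rcases hd with rfl | rfl <;> push_cast at * <;> linarith
    · have := aval_mem hj _ hm2
      rw [aval_cons _ _ hm2.1] at *
      have hde : e = d := by
        rw [abs_lt] at *
        rcases hd with rfl | rfl <;> rcases he with rfl | rfl <;> first | rfl | skip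
        all_goals (exfalso; push_cast at *; linarith)
      subst hde
      rw [ih m hm2 j hj]
      rw [abs_lt] at *
      constructor <;> linarith

lemma near_one (n : ℕ) : ∃ l, Sgood l ∧ vval l = 1 - 1 / 3 ^ (n + 1) := by
  induction n with
  | zero => exact ⟨[2], good_two, by rw [vval_cons, vval_nil]; norm_num⟩
  | succ n ih =>
    obtain ⟨l, hl, h⟩ := ih
    refine ⟨2 :: l, good_cons (Or.inr rfl) hl, ?_⟩
    rw [vval_cons, h, pow_succ 3 (n + 1), div_mul_eq_div_div]
    push_cast; ring

lemma near_zero (n : ℕ) : ∃ l, Sgood l ∧ vval l = 1 / 3 ^ (n + 1) := by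
  induction n with
  | zero => exact ⟨[1], good_one, by rw [vval_cons, vval_nil]; norm_num⟩
  | succ n ih =>
    obtain ⟨l, hl, h⟩ := ih
    refine ⟨0 :: l, good_cons (Or.inl rfl) hl, ?_⟩
    rw [vval_cons, h, pow_succ 3 (n + 1), div_mul_eq_div_div]
    push_cast; ring

lemma small {ε : ℝ} (hε : 0 < ε) : ∃ n : ℕ, 0 < 1 / (3 : ℝ) ^ (n + 1) ∧ 1 / (3 : ℝ) ^ (n + 1) < ε := by
  obtain ⟨n, hn⟩ := exists_pow_lt_of_lt_one hε (by norm_num : (1 / 3 : ℝ) < 1)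
  refine ⟨n, by positivity, ?_⟩
  rw [one_div_pow] at hn
  refine lt_of_le_of_lt ?_ hn
  exact one_div_le_one_div_of_le (by positivity) (pow_le_pow_right₀ (by norm_num) (by omega))

lemma crowd : ∀ l, Sgood l → ∀ ε > 0, ∃ m, Sgood m ∧ vval m ≠ vval l ∧ |vval m - vval l| < ε := by
  apply good_ind
  · intro ε hε
    obtain ⟨n, h0, hn⟩ := small hε
    obtain ⟨l, hl, h⟩ := near_one n
    refine ⟨0 :: l, good_cons (Or.inl rfl) hl, ?_, ?_⟩
    · rw [vval_cons, vval_cons, vval_nil, h]; push_cast; intro h; linarith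
    · rw [vval_cons, vval_cons, vval_nil, h, abs_lt]; push_cast; constructor <;> linarith
  · intro ε hε
    obtain ⟨n, h0, hn⟩ := small hε
    obtain ⟨l, hl, h⟩ := near_zero n
    refine ⟨2 :: l, good_cons (Or.inr rfl) hl, ?_, ?_⟩
    · rw [vval_cons, vval_cons, vval_nil, h]; push_cast; intro h; linarith
    · rw [vval_cons, vval_cons, vval_nil, h, abs_lt]; push_cast; constructor <;> linarith
  · intro d l hd hl ih ε hε
    obtain ⟨m, hm, hne, hlt⟩ := ih ε hε
    refine ⟨d :: m, good_cons hd hm, ?_, ?_⟩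
    · rw [vval_cons, vval_cons]; intro h; apply hne; linarith
    · rw [vval_cons, vval_cons]; rw [abs_lt] at *; constructor <;> linarith

lemma not_cover {ι : Type*} (S : ι → Set ℝ) (hS : ∀ i, IsDiscreteIn (S i)) (s : Finset ι) :
    ∀ D : Set ℝ, D.Nonempty → (∀ x ∈ D, x ∈ closure (D \ {x})) → ¬ D ⊆ ⋃ i ∈ s, S i := by
  classical
  induction s using Finset.induction_on with
  | empty =>
    rintro D ⟨x, hx⟩ _ h
    simpa using h hx
  | insert a s _ ih =>
    intro D hne hcr hsub
    by_cases hx : ∃ x, x ∈ D ∧ x ∈ S a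
    · obtain ⟨x, hxD, hxS⟩ := hx
      obtain ⟨U, hU, hUS⟩ := hS a x hxS
      have hxU : x ∈ U := by
        have : x ∈ U ∩ S a := by rw [hUS]; rfl
        exact this.1
      refine ih (D ∩ (U \ {x})) ?_ ?_ ?_
      · obtain ⟨y, hyU, hyD⟩ := mem_closure_iff.1 (hcr x hxD) U hU hxU
        exact ⟨y, hyD.1, hyU, hyD.2⟩
      · rintro y ⟨hyD, hyU⟩
        rw [mem_closure_iff]
        intro V hV hyV
        have hW : IsOpen (V ∩ (U \ {x})) := hV.inter (hU.sdiff isClosed_singleton)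
        obtain ⟨z, hz, hzD⟩ := mem_closure_iff.1 (hcr y hyD) _ hW ⟨hyV, hyU⟩
        exact ⟨z, hz.1, ⟨hzD.1, hz.2⟩, hzD.2⟩
      · rintro y ⟨hyD, hyU, hyx⟩
        have := hsub hyD
        simp only [Finset.mem_insert, Set.mem_iUnion, exists_prop] at this ⊢
        obtain ⟨i, rfl | hi, hyi⟩ := this
        · have h2 : y ∈ U ∩ S i := ⟨hyU, hyi⟩
          rw [hUS] at h2
          exact absurd h2 hyx
        · exact ⟨i, hi, hyi⟩
    · push Not at hx
      refine ih D hne hcr ?_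
      intro y hyD
      have := hsub hyD
      simp only [Finset.mem_insert, Set.mem_iUnion, exists_prop] at this ⊢
      obtain ⟨i, rfl | hi, hyi⟩ := this
      · exact absurd hyi (hx y hyD)
      · exact ⟨i, hi, hyi⟩

theorem stmt_14 (D E : Set ℝ)
    (hD : D = {x : ℝ | ∃ l : List ℕ, Sgood l ∧ x = vval l})
    (hE : E = {x : ℝ | ∃ l : List ℕ, Sgood l ∧ ∃ k : ℕ, 1 ≤ k ∧ x = aval l k}) :
    Bornology.IsBounded E ∧ IsDiscreteIn E ∧
      (∀ x ∈ D, x ∈ closure (D \ {x})) ∧ D ⊆ closure E ∧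
      ¬∃ (n : ℕ) (S : Fin n → Set ℝ),
        (∀ i, IsDiscreteIn (S i)) ∧ closure E = ⋃ i, S i := by
  have hcr : ∀ x ∈ D, x ∈ closure (D \ {x}) := by
    subst hD
    rintro x ⟨l, hl, rfl⟩
    rw [Metric.mem_closure_iff]
    intro ε hε
    obtain ⟨m, hm, hne, hlt⟩ := crowd l hl ε hε
    refine ⟨vval m, ⟨⟨m, hm, rfl⟩, hne⟩, ?_⟩
    rw [dist_comm, Real.dist_eq]; exact hlt
  have hDE : D ⊆ closure E := by
    subst hD hE
    rintro x ⟨l, hl, rfl⟩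
    have ht : Filter.Tendsto (fun k : ℕ => aval l k) Filter.atTop (nhds (vval l)) := by
      have h1 : Filter.Tendsto (fun k : ℕ => vval l -
          ((-1 : ℝ) ^ (l.getD (l.length - 1) 0) / 3 ^ (l.length + 1)) / (k : ℝ))
          Filter.atTop (nhds (vval l - 0)) :=
        tendsto_const_nhds.sub (tendsto_const_div_atTop_nhds_zero_nat _)
      rw [sub_zero] at h1
      refine h1.congr fun k => ?_
      unfold aval
      rw [div_div, mul_comm (k : ℝ)]
    refine mem_closure_of_tendsto ht ?_
    filter_upwards [Filter.eventually_ge_atTop 1] with k hk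
    exact ⟨l, hl, k, hk, rfl⟩
  refine ⟨?_, ?_, hcr, hDE, ?_⟩
  · subst hE
    refine (Metric.isBounded_Icc (0 : ℝ) 1).subset ?_
    rintro x ⟨l, hl, k, hk, rfl⟩
    have := aval_mem hk l hl
    exact ⟨this.1.le, this.2.le⟩
  · subst hE
    rintro x ⟨l, hl, k, hk, rfl⟩
    obtain ⟨ε, hε, h⟩ := iso hk l hl
    refine ⟨Metric.ball (aval l k) ε, Metric.isOpen_ball, ?_⟩
    ext y
    constructor
    · rintro ⟨hy, m, hm, j, hj, rfl⟩
      rw [Metric.mem_ball, Real.dist_eq] at hy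
      exact h m hm j hj hy
    · rintro rfl
      exact ⟨Metric.mem_ball_self hε, l, hl, k, hk, rfl⟩
  · rintro ⟨n, S, hS, hc⟩
    refine not_cover S hS Finset.univ D ?_ hcr ?_
    · subst hD; exact ⟨_, [1], good_one, rfl⟩
    · rw [hc] at hDE
      simpa using hDE
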